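/- arXiv:1708.03115 — 2 statements merged into one kernel-verified Lean document; each statement's English description precedes it below -/
import Mathlib

section
/- Let α > 0, β > 0, a > 0, ξ > 0, N ≥ 0 be real numbers, and let S(I) = −((I+N)/(α·a))·(log(α/(2ξ(I+N)) − 1 − √((1 − α/(2ξ(I+N)))² − 1)) − α·β) be the best-reply power. Then the best-reply payoff I ↦ 1/(1 + exp(−α(a·S(I)/(I+N) − β))) − ξ·a·S(I) is strictly decreasing (strictly antitone) on the set of I with I + N > 0 and 0 < 4ξ(I+N) < α. -/
/-!
Write `x = I + N` and let `t = α * (a * s / x - β)` be the argument of the sigmoid `σ` at transmit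
power `s`. The payoff is `σ t - (ξ * x / α) * (t + α * β)`, so the first-order condition for a best
reply is `σ' t = ξ * x / α`, and the best-reply payoff `σ t + σ' t * (-(α * β) - t)` is the value at
`-(α * β)` of the tangent line to `σ` at `t`. Since `σ` is strictly concave on `[0, ∞)` and
`-(α * β) ≤ 0`, this value increases with `t ≥ 0`. Finally `σ' t = 1 / (2 * (1 + cosh t))`, so
`t = arcosh (α / (2 * ξ * x) - 1)`, which decreases as `x` increases.
-/

open Real Set

lemma strictMonoOn_tangentLine_eval {f : ℝ → ℝ} {s : Set ℝ} {y : ℝ} (hf : StrictConcaveOn ℝ s f)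
    (hd : ∀ t ∈ s, DifferentiableAt ℝ f t) (hy : y ∈ lowerBounds s) :
    StrictMonoOn (fun t => f t + deriv f t * (y - t)) s := by
  intro t ht t' ht' htt'
  have deriv_lt : deriv f t' < deriv f t := hf.strictAntiOn_deriv hd ht ht' htt'
  have below_tangent : f t < f t' + deriv f t' * (t - t') := by
    have h := hf.deriv_lt_slope ht ht' htt' (hd t' ht')
    rw [slope_def_field, lt_div_iff₀ (sub_pos.2 htt')] at h
    linarith
  calc f t + deriv f t * (y - t)
      ≤ f t + deriv f t' * (y - t) := by
        gcongr 1
        exact mul_le_mul_of_nonpos_right deriv_lt.le (sub_nonpos.2 (hy ht))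
    _ < f t' + deriv f t' * (t - t') + deriv f t' * (y - t) := by gcongr
    _ = f t' + deriv f t' * (y - t') := by ring

lemma strictConcaveOn_sigmoid : StrictConcaveOn ℝ (Ici 0) sigmoid := by
  refine StrictAntiOn.strictConcaveOn_of_deriv (convex_Ici 0) continuous_sigmoid.continuousOn ?_
  rw [interior_Ici, deriv_sigmoid]
  intro t ht t' _ htt'
  have half_lt : 2⁻¹ < sigmoid t := sigmoid_zero ▸ sigmoid_lt ht
  have lt : sigmoid t < sigmoid t' := sigmoid_lt htt'
  have : 0 < (sigmoid t' - sigmoid t) * (sigmoid t + sigmoid t' - 1) :=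
    mul_pos (sub_pos.2 lt) (by linarith)
  linarith

lemma deriv_sigmoid_eq_inv_cosh (t : ℝ) : deriv sigmoid t = (2 * (1 + cosh t))⁻¹ := by
  have exp_mul : exp (-t) * exp t = 1 := by rw [← exp_add, neg_add_cancel, exp_zero]
  calc deriv sigmoid t = sigmoid t * sigmoid (-t) := by rw [deriv_sigmoid, sigmoid_neg]
    _ = ((1 + exp (-t)) * (1 + exp t))⁻¹ := by rw [sigmoid_def, sigmoid_def, neg_neg, mul_inv]
    _ = (2 * (1 + cosh t))⁻¹ := by
      rw [cosh_eq]
      congr 1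
      linear_combination exp_mul

lemma log_sub_sqrt_sq_sub_one {y : ℝ} (hy : 1 ≤ y) : log (y - √(y ^ 2 - 1)) = -arcosh y := by
  rw [← add_sqrt_self_sq_sub_one_inv hy, log_inv, arcosh]

/-- The payoff of a team transmitting at power `s`, where `x` is interference plus noise. -/
noncomputable def payoff (α β a ξ x s : ℝ) : ℝ :=
  1 / (1 + exp (-(α * (a * s / x - β)))) - ξ * a * s

/-- The best-reply power of Eq. (17), where `x` is interference plus noise. -/
noncomputable def bestReply (α β a ξ x : ℝ) : ℝ :=
  -(x / (α * a)) * (log (α / (2 * ξ * x) - 1 - √((1 - α / (2 * ξ * x)) ^ 2 - 1)) - α * β)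

/-- The argument of the sigmoid in the payoff at the best reply, where `x` is interference plus
noise. -/
noncomputable def bestReplyLogit (α ξ x : ℝ) : ℝ :=
  arcosh (α / (2 * ξ * x) - 1)

/-- The values `x` of interference plus noise for which the first-order condition
`σ' t = ξ * x / α` has a solution `t > 0`: since `σ'` decreases from `1 / 4` to `0` on `[0, ∞)`,
this is `0 < ξ * x / α < 1 / 4`. -/
def admissibleRegion (α ξ : ℝ) : Set ℝ :=
  {x | 0 < x ∧ 0 < 4 * ξ * x ∧ 4 * ξ * x < α}

section BestReply

variable {α β a ξ x : ℝ}

lemma one_lt_of_mem_admissibleRegion (hx : x ∈ admissibleRegion α ξ) :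
    1 < α / (2 * ξ * x) - 1 := by
  obtain ⟨-, hξx, hα⟩ := hx
  rw [lt_sub_iff_add_lt, lt_div_iff₀ (by linarith)]
  linarith

lemma bestReplyLogit_nonneg (hx : x ∈ admissibleRegion α ξ) : 0 ≤ bestReplyLogit α ξ x :=
  arcosh_nonneg (one_lt_of_mem_admissibleRegion hx).le

lemma strictAntiOn_bestReplyLogit :
    StrictAntiOn (bestReplyLogit α ξ) (admissibleRegion α ξ) := by
  intro x hx y hy hxy
  refine strictMonoOn_arcosh (one_pos.trans (one_lt_of_mem_admissibleRegion hy))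
    (one_pos.trans (one_lt_of_mem_admissibleRegion hx)) ?_
  obtain ⟨hx_pos, hξx, hα⟩ := hx
  have hξ : 0 < ξ := by linarith [pos_of_mul_pos_left hξx hx_pos.le]
  have hα_pos : 0 < α := hξx.trans hα
  gcongr

lemma deriv_sigmoid_bestReplyLogit (hx : x ∈ admissibleRegion α ξ) :
    deriv sigmoid (bestReplyLogit α ξ x) = ξ * x / α := by
  rw [deriv_sigmoid_eq_inv_cosh, bestReplyLogit, cosh_arcosh (one_lt_of_mem_admissibleRegion hx).le,
    add_sub_cancel, ← mul_div_assoc, inv_div, mul_assoc 2 ξ x, mul_div_mul_left _ _ two_ne_zero]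

lemma bestReply_eq_bestReplyLogit (hx : x ∈ admissibleRegion α ξ) :
    bestReply α β a ξ x = x / (α * a) * (bestReplyLogit α ξ x + α * β) := by
  rw [bestReply, sub_sq_comm, log_sub_sqrt_sq_sub_one (one_lt_of_mem_admissibleRegion hx).le,
    bestReplyLogit]
  ring

lemma payoff_bestReply_eq_tangentLine (ha : a ≠ 0) (hx : x ∈ admissibleRegion α ξ) :
    payoff α β a ξ x (bestReply α β a ξ x) =
      sigmoid (bestReplyLogit α ξ x) +
        deriv sigmoid (bestReplyLogit α ξ x) * (-(α * β) - bestReplyLogit α ξ x) := by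
  have hx₀ : x ≠ 0 := hx.1.ne'
  have hα : α ≠ 0 := (hx.2.1.trans hx.2.2).ne'
  rw [deriv_sigmoid_bestReplyLogit hx, bestReply_eq_bestReplyLogit hx]
  generalize bestReplyLogit α ξ x = t
  have logit_eq : α * (a * (x / (α * a) * (t + α * β)) / x - β) = t := by
    field_simp
    ring
  have cost_eq : ξ * a * (x / (α * a) * (t + α * β)) = ξ * x / α * (t + α * β) := by
    field_simp
  rw [payoff, logit_eq, cost_eq, sigmoid_def]
  ring

theorem bestReply_payoff_strictAnti_general (hβ : 0 ≤ β) (ha : a ≠ 0) :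
    StrictAntiOn (fun x => payoff α β a ξ x (bestReply α β a ξ x)) (admissibleRegion α ξ) := by
  intro x hx y hy hxy
  have hα : 0 < α := hx.2.1.trans hx.2.2
  have lower_bound : -(α * β) ∈ lowerBounds (Ici (0 : ℝ)) := fun t ht =>
    (neg_nonpos.2 (by positivity)).trans ht
  have tangent_mono := strictMonoOn_tangentLine_eval strictConcaveOn_sigmoid
    (fun _ _ => differentiableAt_sigmoid) lower_bound
  simp only [payoff_bestReply_eq_tangentLine ha hx, payoff_bestReply_eq_tangentLine ha hy]
  exact tangent_mono (bestReplyLogit_nonneg hy) (bestReplyLogit_nonneg hx)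
    (strictAntiOn_bestReplyLogit hx hy hxy)

end BestReply

/-- The payoff obtained when playing the best reply is strictly decreasing in
the interference `I` on the admissible region. -/
theorem bestReply_payoff_strictAnti
    (α β a ξ N : ℝ) (hα : 0 < α) (hβ : 0 < β) (ha : 0 < a) (hξ : 0 < ξ) (hN : 0 ≤ N)
    (S : ℝ → ℝ)
    (hS : S = fun I => -((I + N) / (α * a)) *
      (Real.log (α / (2 * ξ * (I + N)) - 1 -
          Real.sqrt ((1 - α / (2 * ξ * (I + N))) ^ 2 - 1)) - α * β)) :
    StrictAntiOn
      (fun I : ℝ =>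
        1 / (1 + Real.exp (-(α * (a * S I / (I + N) - β)))) - ξ * a * S I)
      {I : ℝ | 0 < I + N ∧ 0 < 4 * ξ * (I + N) ∧ 4 * ξ * (I + N) < α} := by
  subst hS
  exact fun I hI J hJ hIJ =>
    bestReply_payoff_strictAnti_general hβ.le ha.ne' hI hJ (by gcongr)
end

section
/- Let α > 0, a > 0 and β ∈ ℝ be real numbers, and define D(t) = β/a − 1/(a·√(α(α − 4t))) − (1/(α·a))·log(α/(2t) − 1 − √((α/(2t) − 1)² − 1)) for t ∈ (0, α/4). Then there exists t ∈ (0, α/4) with D(t) = 0; that is, the derivative of the best-reply power with respect to interference, which is positive for small interference and negative near the maximal admissible interference, vanishes at some intermediate interference level. -/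
/-!
On `[1, ∞)` the numbers `x - √(x ^ 2 - 1)` and `x + √(x ^ 2 - 1)` are reciprocal, so the logarithm
in Eq. (19) is `-arcosh (α / (2 * t) - 1)`. As `t → 0⁺` this `arcosh` drives the derivative to `+∞`,
while as `t → α / 4⁻` the `arcosh` vanishes and the reciprocal square root drives the derivative to
`-∞`. By continuity every real value, in particular `0`, is attained in between.
-/

section

open Filter Set Topology

theorem log_sub_sqrt_sq_sub_one_s18 {x : ℝ} (hx : 1 ≤ x) :
    Real.log (x - √(x ^ 2 - 1)) = -Real.arcosh x := by
  rw [← Real.add_sqrt_self_sq_sub_one_inv hx, Real.log_inv, Real.arcosh]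

theorem tendsto_arcosh_atTop : Tendsto Real.arcosh atTop atTop :=
  Real.tendsto_log_atTop.comp <|
    tendsto_atTop_mono (fun _ ↦ le_add_of_nonneg_right (Real.sqrt_nonneg _)) tendsto_id

/-- The derivative of the best-reply power with respect to interference (Eq. (19)), as a function
of `t = ξ(I+N)`. It is meaningful for `t ∈ (0, α / 4)`; elsewhere it takes junk values. -/
noncomputable def bestReplyDeriv (α a β t : ℝ) : ℝ :=
  β / a - 1 / (a * √(α * (α - 4 * t))) -
    (1 / (α * a)) * Real.log (α / (2 * t) - 1 - √((α / (2 * t) - 1) ^ 2 - 1))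

variable {α a β t : ℝ}

theorem one_lt_div_two_mul_sub_one (ht : t ∈ Ioo 0 (α / 4)) : 1 < α / (2 * t) - 1 := by
  have ht₀ : 0 < 2 * t := by linarith [ht.1]
  have : 2 < α / (2 * t) := (lt_div_iff₀ ht₀).2 (by linarith [ht.2])
  linarith

theorem eqOn_bestReplyDeriv_arcosh :
    EqOn (bestReplyDeriv α a β)
      (fun t ↦ (β - (√(α * (α - 4 * t)))⁻¹ + Real.arcosh (α / (2 * t) - 1) / α) / a)
      (Ioo 0 (α / 4)) := by
  intro t ht
  simp only [bestReplyDeriv, log_sub_sqrt_sq_sub_one_s18 (one_lt_div_two_mul_sub_one ht).le,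
    one_div, mul_inv]
  ring

theorem continuousOn_bestReplyDeriv :
    ContinuousOn (bestReplyDeriv α a β) (Ioo 0 (α / 4)) := by
  refine ContinuousOn.congr ?_ eqOn_bestReplyDeriv_arcosh
  have hsqrt : ∀ t ∈ Ioo 0 (α / 4), √(α * (α - 4 * t)) ≠ 0 := fun t ht ↦
    (Real.sqrt_pos.2 (mul_pos (by linarith [ht.1, ht.2]) (by linarith [ht.2]))).ne'
  have harg : ContinuousOn (fun t ↦ α / (2 * t) - 1) (Ioo 0 (α / 4)) :=
    (continuousOn_const.div (by fun_prop) fun t ht ↦ mul_ne_zero two_ne_zero ht.1.ne').sub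
      continuousOn_const
  have harcosh : ContinuousOn (fun t ↦ Real.arcosh (α / (2 * t) - 1)) (Ioo 0 (α / 4)) :=
    Real.continuousOn_arcosh.comp harg fun t ht ↦ (one_lt_div_two_mul_sub_one ht).le
  have hinv : ContinuousOn (fun t ↦ (√(α * (α - 4 * t)))⁻¹) (Ioo 0 (α / 4)) :=
    ContinuousOn.inv₀ (by fun_prop) hsqrt
  exact ((continuousOn_const.sub hinv).add (harcosh.div_const α)).div_const a

theorem tendsto_bestReplyDeriv_nhdsGT_zero (hα : 0 < α) (ha : 0 < a) :
    Tendsto (bestReplyDeriv α a β) (𝓝[>] 0) atTop := by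
  have harg : Tendsto (fun t ↦ α / (2 * t) - 1) (𝓝[>] 0) atTop := by
    have : Tendsto (fun t : ℝ ↦ α / 2 * t⁻¹) (𝓝[>] 0) atTop :=
      tendsto_inv_nhdsGT_zero.const_mul_atTop (half_pos hα)
    exact (tendsto_atTop_add_const_right _ (-1) this).congr fun t ↦ by ring
  have harcosh : Tendsto (fun t ↦ Real.arcosh (α / (2 * t) - 1) / α) (𝓝[>] 0) atTop :=
    (tendsto_arcosh_atTop.comp harg).atTop_div_const hα
  have hinv : ContinuousAt (fun t ↦ β - (√(α * (α - 4 * t)))⁻¹) 0 :=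
    continuousAt_const.sub <| ContinuousAt.inv₀ (by fun_prop) <|
      (Real.sqrt_pos.2 (by simpa using mul_pos hα hα)).ne'
  refine ((hinv.mono_left nhdsWithin_le_nhds).add_atTop harcosh).atTop_div_const ha |>.congr' ?_
  exact (eqOn_bestReplyDeriv_arcosh.eventuallyEq_of_mem
    (Ioo_mem_nhdsGT (by linarith))).symm

theorem tendsto_bestReplyDeriv_nhdsLT_div_four (hα : 0 < α) (ha : 0 < a) :
    Tendsto (bestReplyDeriv α a β) (𝓝[<] (α / 4)) atBot := by
  have hmem : Ioo 0 (α / 4) ∈ 𝓝[<] (α / 4) := Ioo_mem_nhdsLT (by linarith)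
  have hsqrt : Tendsto (fun t ↦ √(α * (α - 4 * t))) (𝓝[<] (α / 4)) (𝓝[>] 0) := by
    refine tendsto_nhdsWithin_iff.2 ⟨?_, ?_⟩
    · have : Continuous fun t ↦ √(α * (α - 4 * t)) := by fun_prop
      exact (this.tendsto' (α / 4) 0 (by simp [mul_div_cancel₀])).mono_left nhdsWithin_le_nhds
    · filter_upwards [self_mem_nhdsWithin] with t (ht : t < α / 4)
      exact Real.sqrt_pos.2 (mul_pos hα (by linarith))
  have hinv : Tendsto (fun t ↦ β - (√(α * (α - 4 * t)))⁻¹) (𝓝[<] (α / 4)) atBot :=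
    tendsto_atBot_add_const_left _ β (tendsto_neg_atTop_atBot.comp hsqrt.inv_tendsto_nhdsGT_zero)
  have harg : Tendsto (fun t ↦ α / (2 * t) - 1) (𝓝[<] (α / 4)) (𝓝[≥] 1) := by
    refine tendsto_nhdsWithin_iff.2 ⟨?_, ?_⟩
    · have : ContinuousAt (fun t ↦ α / (2 * t) - 1) (α / 4) := by
        fun_prop (disch := positivity)
      have hval : α / (2 * (α / 4)) - 1 = 1 := by field_simp; norm_num
      simpa only [hval] using this.mono_left nhdsWithin_le_nhds
    · filter_upwards [hmem] with t ht using (one_lt_div_two_mul_sub_one ht).le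
  have harcosh :
      Tendsto (fun t ↦ Real.arcosh (α / (2 * t) - 1) / α) (𝓝[<] (α / 4)) (𝓝 0) := by
    have := (Real.continuousOn_arcosh 1 self_mem_Ici).tendsto.comp harg
    simpa using this.div_const α
  refine (hinv.atBot_add harcosh).atBot_div_const ha |>.congr' ?_
  exact (eqOn_bestReplyDeriv_arcosh.eventuallyEq_of_mem hmem).symm

theorem surjOn_bestReplyDeriv (hα : 0 < α) (ha : 0 < a) :
    SurjOn (bestReplyDeriv α a β) (Ioo 0 (α / 4)) univ := by
  have hα₄ : 0 < α / 4 := by linarith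
  refine continuousOn_bestReplyDeriv.surjOn_of_tendsto' (nonempty_Ioo.2 hα₄) ?_ ?_
  · exact (tendsto_comp_coe_Ioo_atBot hα₄).2 (tendsto_bestReplyDeriv_nhdsGT_zero hα ha)
  · exact (tendsto_comp_coe_Ioo_atTop hα₄).2 (tendsto_bestReplyDeriv_nhdsLT_div_four hα ha)

end

/-- The derivative of the best-reply power with respect to interference
(Eq. (19)), as a function of `t = ξ(I+N)`, vanishes at some `t ∈ (0, α/4)`. -/
theorem bestReply_deriv_exists_zero
    (α a β : ℝ) (hα : 0 < α) (ha : 0 < a)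
    (D : ℝ → ℝ)
    (hD : D = fun t => β / a - 1 / (a * Real.sqrt (α * (α - 4 * t))) -
      (1 / (α * a)) *
        Real.log (α / (2 * t) - 1 - Real.sqrt ((α / (2 * t) - 1) ^ 2 - 1))) :
    ∃ t ∈ Set.Ioo 0 (α / 4), D t = 0 := by
  obtain rfl : D = bestReplyDeriv α a β := hD
  exact surjOn_bestReplyDeriv hα ha (Set.mem_univ 0)
end
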